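/- (Hörmander-type L^p-L^q multiplier theorem) Let 1 < p ≤ 2 ≤ q < ∞ and let A be a Fourier multiplier on C^∞(Ω) with symbol σ : L^⊥ → C satisfying K := sup_{s>0} s (#{κ ∈ L^⊥ : |σ(κ)| ≥ s})^{1/p - 1/q} < ∞. Then there is a constant C depending only on p and q such that ‖Af‖_{L^q(Ω)} ≤ C·K·‖f‖_{L^p(Ω)} for all f ∈ C^∞(Ω); in particular A extends to a bounded operator L^p(Ω) → L^q(Ω). -/

import Mathlib

open MeasureTheory Complex Real ENNReal

noncomputable section

/-- The lattice in `ℝ^d` generated by the columns of the matrix `A`, i.e. `A ℤ^d`. -/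
def latticeOf {d : ℕ} (A : Matrix (Fin d) (Fin d) ℝ) : Set (Fin d → ℝ) :=
  {x | ∃ k : Fin d → ℤ, x = A.mulVec (fun i => (k i : ℝ))}

/-- The dual lattice `L^⊥ = {κ : ∀ λ ∈ L, κ·λ ∈ ℤ}`. -/
def dualLattice {d : ℕ} (L : Set (Fin d → ℝ)) : Set (Fin d → ℝ) :=
  {κ | ∀ l ∈ L, ∃ n : ℤ, (∑ i, κ i * l i) = (n : ℝ)}

/-- `Ω` is a (measurable) fundamental domain of `L`: every `x ∈ ℝ^d` is uniquely
`ω + λ` with `ω ∈ Ω`, `λ ∈ L`. -/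
def IsFundDomain {d : ℕ} (L Ω : Set (Fin d → ℝ)) : Prop :=
  MeasurableSet Ω ∧ ∀ x : Fin d → ℝ, ∃! p : (Fin d → ℝ) × (Fin d → ℝ),
    p.1 ∈ Ω ∧ p.2 ∈ L ∧ x = p.1 + p.2

/-- The normalized measure `dx / m(Ω)` on the fundamental domain `Ω`. -/
def normMeasure {d : ℕ} (Ω : Set (Fin d → ℝ)) : Measure (Fin d → ℝ) :=
  (volume Ω)⁻¹ • volume.restrict Ω

/-- The Fourier coefficient `f̂(κ) = (1/m(Ω)) ∫_Ω f(x) e^{-2πi κ·x} dx`. -/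
def fourierCoef {d : ℕ} (Ω : Set (Fin d → ℝ)) (f : (Fin d → ℝ) → ℂ)
    (κ : Fin d → ℝ) : ℂ :=
  ∫ x, f x * Complex.exp (-2 * π * Complex.I * (∑ i, κ i * x i)) ∂(normMeasure Ω)


/-- Orthonormal unimodular system. -/
structure OrthSys {X ι : Type} [MeasurableSpace X] (μ : Measure X) (e : ι → X → ℂ) : Prop where
  meas : ∀ i, Measurable (e i)
  norm_one : ∀ i x, ‖e i x‖ = 1
  self : ∀ i, ∫ x, e i x * (starRingEnd ℂ) (e i x) ∂μ = 1
  ne : ∀ i j, i ≠ j → ∫ x, e i x * (starRingEnd ℂ) (e j x) ∂μ = 0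

lemma OrthSys.bessel {X ι : Type} [MeasurableSpace X] {μ : Measure X} [IsProbabilityMeasure μ]
    {e : ι → X → ℂ} (h : OrthSys μ e) (S : Finset ι) (a : ι → ℂ) :
    ∫⁻ x, ENNReal.ofReal (‖∑ i ∈ S, a i * e i x‖ ^ 2) ∂μ = ENNReal.ofReal (∑ i ∈ S, ‖a i‖ ^ 2) := by
  classical
  have hm : Measurable (fun x => ∑ i ∈ S, a i * e i x) :=
    Finset.measurable_fun_sum _ fun i _ => (h.meas i).const_mul _
  have hb : ∀ x, ‖∑ i ∈ S, a i * e i x‖ ≤ ∑ i ∈ S, ‖a i‖ := fun x =>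
    (norm_sum_le _ _).trans (Finset.sum_le_sum fun i _ => by simp [h.norm_one])
  have hint : Integrable (fun x => ‖∑ i ∈ S, a i * e i x‖ ^ 2) μ := by
    refine Integrable.of_bound (C := (∑ i ∈ S, ‖a i‖) ^ 2) (hm.norm.pow_const 2).aestronglyMeasurable
      (Filter.Eventually.of_forall fun x => ?_)
    rw [Real.norm_of_nonneg (by positivity)]
    exact pow_le_pow_left₀ (norm_nonneg _) (hb x) 2
  rw [← ofReal_integral_eq_lintegral_ofReal hint (Filter.Eventually.of_forall fun x => by positivity)]
  congr 1
  have : ((∫ x, ‖∑ i ∈ S, a i * e i x‖ ^ 2 ∂μ : ℝ) : ℂ) = ((∑ i ∈ S, ‖a i‖ ^ 2 : ℝ) : ℂ) := by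
    rw [← integral_complex_ofReal]
    have h1 : ∀ x, ((‖∑ i ∈ S, a i * e i x‖ ^ 2 : ℝ) : ℂ) =
        ∑ i ∈ S, ∑ j ∈ S, (a i * (starRingEnd ℂ) (a j)) * (e i x * (starRingEnd ℂ) (e j x)) := by
      intro x
      push_cast
      rw [← Complex.mul_conj', map_sum, Finset.sum_mul_sum]
      refine Finset.sum_congr rfl fun i _ => Finset.sum_congr rfl fun j _ => ?_
      rw [map_mul]; ring
    have hij : ∀ i j, Integrable (fun x => (a i * (starRingEnd ℂ) (a j)) * (e i x * (starRingEnd ℂ) (e j x))) μ := by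
      intro i j
      refine Integrable.const_mul ?_ _
      refine Integrable.of_bound (C := 1) ?_ (Filter.Eventually.of_forall fun x => ?_)
      · exact ((h.meas i).mul (Complex.continuous_conj.measurable.comp (h.meas j))).aestronglyMeasurable
      · simp [h.norm_one]
    simp_rw [h1]
    rw [integral_finsetSum _ fun i _ => integrable_finsetSum _ fun j _ => hij i j]
    push_cast
    refine Finset.sum_congr rfl fun i hi => ?_
    rw [integral_finsetSum _ fun j _ => hij i j, Finset.sum_eq_single i]
    · rw [integral_const_mul, h.self, mul_one, Complex.mul_conj']
    · intro j _ hj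
      rw [integral_const_mul, h.ne i j hj.symm, mul_zero]
    · exact fun h => absurd hi h
  exact_mod_cast this

lemma sum_rpow_le {ι : Type} (β : ℝ) (h0 : 0 ≤ β) (h1 : β < 1) (w : ι → ℝ) :
    ∀ (n : ℕ) (S : Finset ι), S.card = n → (∀ i ∈ S, 0 < w i) →
      (∀ t : ℝ, 0 < t → ((S.filter (fun i => t ≤ w i)).card : ℝ) * t ≤ 1) →
      ∑ i ∈ S, w i ^ β ≤ (n : ℝ) ^ (1 - β) / (1 - β) := by
  classical
  intro n
  induction n with
  | zero =>
    intro S hS _ _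
    rw [Finset.card_eq_zero] at hS
    subst hS
    simp only [Finset.sum_empty]
    have : 0 < 1 - β := by linarith
    positivity
  | succ n ih =>
    intro S hS hw hc
    obtain ⟨i, hi, hmin⟩ := S.exists_min_image w (Finset.card_pos.1 (by omega))
    have hwi : ((n + 1 : ℕ) : ℝ) * w i ≤ 1 := by
      have := hc (w i) (hw i hi)
      rwa [Finset.filter_true_of_mem (fun j hj => hmin j hj), hS] at this
    have ih' := ih (S.erase i) (by rw [Finset.card_erase_of_mem hi, hS]; rfl)
      (fun j hj => hw j (Finset.mem_of_mem_erase hj)) (fun t ht => by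
        refine le_trans ?_ (hc t ht)
        gcongr
        exact Finset.erase_subset _ _)
    rw [← Finset.add_sum_erase S _ hi]
    have hm : (0 : ℝ) < ((n + 1 : ℕ) : ℝ) := by positivity
    set m : ℝ := ((n + 1 : ℕ) : ℝ) with hmdef
    have hn : (n : ℝ) = m - 1 := by rw [hmdef]; push_cast; ring
    have hm1 : 1 ≤ m := by rw [hmdef]; push_cast; linarith [Nat.cast_nonneg (α := ℝ) n]
    have e1 : w i ^ β ≤ m ^ (-β) := by
      rw [Real.rpow_neg hm.le, ← Real.inv_rpow hm.le]
      apply Real.rpow_le_rpow (hw i hi).le _ h0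
      rw [le_inv_comm₀ (hw i hi) hm, ← one_div, le_div_iff₀ (hw i hi)]
      exact hwi
    have e2 : (m - 1) ^ (1 - β) ≤ m ^ (1 - β) - (1 - β) * m ^ (-β) := by
      have hb := rpow_one_add_le_one_add_mul_self (s := -(1 / m)) (p := 1 - β)
        (by rw [neg_le_neg_iff, div_le_one hm]; exact hm1) (by linarith) (by linarith)
      have h3 : m - 1 = m * (1 + -(1 / m)) := by field_simp; ring
      rw [h3, Real.mul_rpow hm.le (by
        have : 1 / m ≤ 1 := by rw [div_le_one hm]; exact hm1
        linarith)]
      calc m ^ (1 - β) * (1 + -(1 / m)) ^ (1 - β) ≤ m ^ (1 - β) * (1 + (1 - β) * -(1 / m)) := by gcongr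
        _ = m ^ (1 - β) - (1 - β) * (m ^ (1 - β) / m) := by ring
        _ = _ := by
          rw [← Real.rpow_sub_one hm.ne']; congr 3; ring
    have hβ : 0 < 1 - β := by linarith
    rw [hn] at ih'
    calc w i ^ β + ∑ j ∈ S.erase i, w j ^ β ≤ m ^ (-β) + (m - 1) ^ (1 - β) / (1 - β) := by gcongr
      _ ≤ m ^ (-β) + (m ^ (1 - β) - (1 - β) * m ^ (-β)) / (1 - β) := by gcongr
      _ = _ := by field_simp; ring

lemma lint_rpow (q T : ℝ) (hq : 2 < q) (hT : 0 < T) :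
    ∫⁻ t in Set.Ioo 0 T, ENNReal.ofReal (t ^ (q - 3)) = ENNReal.ofReal (T ^ (q - 2) / (q - 2)) := by
  have hi : IntervalIntegrable (fun t : ℝ => t ^ (q - 3)) volume 0 T :=
    intervalIntegral.intervalIntegrable_rpow' (by linarith)
  rw [setLIntegral_congr Ioo_ae_eq_Ioc, ← ofReal_integral_eq_lintegral_ofReal
    ((intervalIntegrable_iff_integrableOn_Ioc_of_le hT.le).1 hi), 
    ← intervalIntegral.integral_of_le hT.le, integral_rpow (Or.inl (by linarith))]
  · congr 1
    rw [show q - 3 + 1 = q - 2 by ring, Real.zero_rpow (by linarith)]; simp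
  · refine (ae_restrict_iff' measurableSet_Ioc).2 (Filter.Eventually.of_forall fun t ht => ?_)
    exact Real.rpow_nonneg ht.1.le _

lemma OrthSys.weak {X ι : Type} [MeasurableSpace X] {μ : Measure X} [IsProbabilityMeasure μ]
    {e : ι → X → ℂ} (h : OrthSys μ e) (q : ℝ) (hq : 2 < q) (S : Finset ι) (c : ι → ℂ) (w : ι → ℝ)
    (hw : ∀ i ∈ S, 0 < w i)
    (hc : ∀ t : ℝ, 0 < t → ((S.filter (fun i => t ≤ w i)).card : ℝ) * t ≤ 1)
    (hc1 : ∑ i ∈ S, ‖c i‖ ^ 2 ≤ 1) (t : ℝ) (ht : 0 < t) :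
    μ {x | t < ‖∑ i ∈ S, ((w i ^ (1 / 2 - 1 / q) : ℝ) : ℂ) * c i * e i x‖} ≤
      ENNReal.ofReal (4 / t ^ 2 * ∑ i ∈ S.filter (fun i => t < √(2 * q) * w i ^ (-(1 / q))),
        w i ^ (1 - 2 / q) * ‖c i‖ ^ 2) := by
  classical
  set Sl := S.filter (fun i => t < √(2 * q) * w i ^ (-(1 / q))) with hSl
  set Sh := S.filter (fun i => ¬ t < √(2 * q) * w i ^ (-(1 / q))) with hSh
  set a : ι → ℂ := fun i => ((w i ^ (1 / 2 - 1 / q) : ℝ) : ℂ) * c i with ha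
  have hq0 : 0 < q := by linarith
  have hβ1 : 2 / q < 1 := by rw [div_lt_one hq0]; exact hq
  have hs0 : 0 < √(2 * q) := by positivity
  have hsq : √(2 * q) ^ 2 = 2 * q := Real.sq_sqrt (by positivity)
  have hsum : ∑ i ∈ Sh, w i ^ (1 - 2 / q) ≤ t ^ 2 / 4 := by
    have h1 := sum_rpow_le (1 - 2 / q) (by linarith) (by have : 0 < 2 / q := by positivity
                                                         linarith) w Sh.card Sh rfl
      (fun i hi => hw i (Finset.mem_of_mem_filter i hi)) (fun t ht => by
        refine le_trans ?_ (hc t ht)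
        gcongr
        exact Finset.filter_subset _ _)
    refine h1.trans ?_
    set l : ℝ := (t / √(2 * q)) ^ (-q) with hl
    have hl0 : 0 < l := by positivity
    have hcard : (Sh.card : ℝ) ≤ l⁻¹ := by
      rw [← one_div, le_div_iff₀ hl0]
      refine le_trans ?_ (hc l hl0)
      gcongr
      intro i hi
      rw [hSh, Finset.mem_filter] at hi
      rw [Finset.mem_filter]
      refine ⟨hi.1, ?_⟩
      have hwi := hw i hi.1
      have h2 : w i ^ (-(1 / q)) ≤ t / √(2 * q) := by
        rw [le_div_iff₀ hs0, mul_comm]; exact not_lt.1 hi.2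
      have h3 := Real.rpow_le_rpow_of_nonpos (z := -q) (by positivity) h2 (by linarith)
      rwa [← Real.rpow_mul hwi.le, show -(1 / q) * -q = 1 by field_simp, Real.rpow_one] at h3
    have h4 : (Sh.card : ℝ) ^ (2 / q) ≤ t ^ 2 / (2 * q) := by
      calc (Sh.card : ℝ) ^ (2 / q) ≤ (l⁻¹) ^ (2 / q) := by gcongr
        _ = t ^ 2 / (2 * q) := by
          rw [hl, ← Real.rpow_neg (by positivity), ← Real.rpow_mul (by positivity),
            show - -q * (2 / q) = (2 : ℕ) by push_cast; field_simp, Real.rpow_natCast, div_pow, hsq]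
    rw [show 1 - (1 - 2 / q) = 2 / q by ring]
    calc (Sh.card : ℝ) ^ (2 / q) / (2 / q) ≤ t ^ 2 / (2 * q) / (2 / q) := by gcongr
      _ = t ^ 2 / 4 := by field_simp; norm_num
  have hna : ∀ i ∈ S, ‖a i‖ ^ 2 = w i ^ (1 - 2 / q) * ‖c i‖ ^ 2 := by
    intro i hi
    have := hw i hi
    rw [ha]; simp only [norm_mul, Complex.norm_real, mul_pow]
    rw [Real.norm_of_nonneg (by positivity), ← Real.rpow_natCast (_ ^ _), ← Real.rpow_mul this.le]
    congr 2; push_cast; ring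
  have hhigh : ∀ x, ‖∑ i ∈ Sh, a i * e i x‖ ≤ t / 2 := by
    intro x
    refine abs_le_of_sq_le_sq' ?_ (by positivity) |>.2
    calc ‖∑ i ∈ Sh, a i * e i x‖ ^ 2 ≤ (∑ i ∈ Sh, w i ^ (1 / 2 - 1 / q) * ‖c i‖) ^ 2 := by
          gcongr
          refine (norm_sum_le _ _).trans (Finset.sum_le_sum fun i hi => ?_)
          have := hw i (Finset.mem_of_mem_filter i hi)
          rw [ha]; simp only [norm_mul, Complex.norm_real, h.norm_one, mul_one]
          rw [Real.norm_of_nonneg (by positivity)]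
      _ ≤ (∑ i ∈ Sh, (w i ^ (1 / 2 - 1 / q)) ^ 2) * ∑ i ∈ Sh, ‖c i‖ ^ 2 :=
          Finset.sum_mul_sq_le_sq_mul_sq _ _ _
      _ ≤ (t ^ 2 / 4) * 1 := by
          gcongr
          · refine le_trans (le_of_eq (Finset.sum_congr rfl fun i hi => ?_)) hsum
            have := hw i (Finset.mem_of_mem_filter i hi)
            rw [← Real.rpow_natCast (_ ^ _), ← Real.rpow_mul this.le]
            congr 1; push_cast; ring
          · refine le_trans (Finset.sum_le_sum_of_subset_of_nonneg (Finset.filter_subset _ _) ?_) hc1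
            intros; positivity
      _ = (t / 2) ^ 2 := by ring
  have hsub : {x | t < ‖∑ i ∈ S, a i * e i x‖} ⊆
      {x | ENNReal.ofReal (t ^ 2 / 4) ≤ ENNReal.ofReal (‖∑ i ∈ Sl, a i * e i x‖ ^ 2)} := by
    intro x hx
    simp only [Set.mem_ofPred_eq] at hx ⊢
    rw [← Finset.sum_filter_add_sum_filter_not S (fun i => t < √(2 * q) * w i ^ (-(1 / q)))] at hx
    have h1 := norm_add_le (∑ i ∈ Sl, a i * e i x) (∑ i ∈ Sh, a i * e i x)
    have h2 := hhigh x
    have h3 : t / 2 ≤ ‖∑ i ∈ Sl, a i * e i x‖ := by linarith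
    apply ENNReal.ofReal_le_ofReal
    calc t ^ 2 / 4 = (t / 2) ^ 2 := by ring
      _ ≤ _ := by gcongr
  refine (measure_mono hsub).trans ?_
  have hm : Measurable (fun x => ∑ i ∈ Sl, a i * e i x) :=
    Finset.measurable_fun_sum _ fun i _ => (h.meas i).const_mul _
  refine (meas_ge_le_lintegral_div (hm.norm.pow_const 2).ennreal_ofReal.aemeasurable
    (by simpa using by positivity) ENNReal.ofReal_ne_top).trans ?_
  rw [h.bessel, ← ENNReal.ofReal_div_of_pos (by positivity)]
  apply ENNReal.ofReal_le_ofReal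
  rw [Finset.sum_congr rfl fun i hi => hna i (Finset.mem_of_mem_filter i hi)]
  apply le_of_eq
  field_simp
  rfl


lemma OrthSys.strong {X ι : Type} [MeasurableSpace X] {μ : Measure X} [IsProbabilityMeasure μ]
    {e : ι → X → ℂ} (h : OrthSys μ e) (q : ℝ) (hq : 2 < q) (S : Finset ι) (c : ι → ℂ) (w : ι → ℝ)
    (hw : ∀ i ∈ S, 0 < w i)
    (hc : ∀ t : ℝ, 0 < t → ((S.filter (fun i => t ≤ w i)).card : ℝ) * t ≤ 1)
    (hc1 : ∑ i ∈ S, ‖c i‖ ^ 2 ≤ 1) :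
    ∫⁻ x, ENNReal.ofReal (‖∑ i ∈ S, ((w i ^ (1 / 2 - 1 / q) : ℝ) : ℂ) * c i * e i x‖ ^ q) ∂μ ≤
      ENNReal.ofReal (q * (4 * √(2 * q) ^ (q - 2) / (q - 2))) := by
  classical
  have hm : Measurable (fun x => ∑ i ∈ S, ((w i ^ (1 / 2 - 1 / q) : ℝ) : ℂ) * c i * e i x) :=
    Finset.measurable_fun_sum _ fun i _ => (h.meas i).const_mul _
  have hq0 : 0 < q := by linarith
  have hq2 : 0 < q - 2 := by linarith
  rw [lintegral_rpow_eq_lintegral_meas_lt_mul μ (Filter.Eventually.of_forall fun x => norm_nonneg _)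
    hm.norm.aemeasurable hq0, ENNReal.ofReal_mul hq0.le]
  gcongr
  set T : ι → ℝ := fun i => √(2 * q) * w i ^ (-(1 / q)) with hT
  have hT0 : ∀ i ∈ S, 0 < T i := fun i hi => by have := hw i hi; simp only [hT]; positivity
  calc ∫⁻ t in Set.Ioi 0, μ {x | t < ‖∑ i ∈ S, ((w i ^ (1 / 2 - 1 / q) : ℝ) : ℂ) * c i * e i x‖}
        * ENNReal.ofReal (t ^ (q - 1))
      ≤ ∫⁻ t in Set.Ioi 0, ∑ i ∈ S, ENNReal.ofReal (4 * (w i ^ (1 - 2 / q) * ‖c i‖ ^ 2)) *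
          (Set.Ioo 0 (T i)).indicator (fun t => ENNReal.ofReal (t ^ (q - 3))) t := by
        refine setLIntegral_mono' measurableSet_Ioi fun t ht => ?_
        have ht : 0 < t := ht
        refine (mul_le_mul_left (h.weak q hq S c w hw hc hc1 t ht) _).trans ?_
        rw [← ENNReal.ofReal_mul' (by positivity), Finset.mul_sum, Finset.sum_mul,
          Finset.sum_filter, ENNReal.ofReal_sum_of_nonneg]
        · refine Finset.sum_le_sum fun i hi => ?_
          have hwi := hw i hi
          split_ifs with hti
          · rw [Set.indicator_of_mem (show t ∈ Set.Ioo 0 (T i) from ⟨ht, hti⟩),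
              ← ENNReal.ofReal_mul (by positivity)]
            apply le_of_eq; congr 1
            have : t ^ (q - 1) = t ^ (q - 3) * t ^ 2 := by
              rw [← Real.rpow_natCast, ← Real.rpow_add ht]; congr 1; push_cast; ring
            rw [this]; field_simp
          · simp
        · intro i hi
          have hwi := hw i hi
          split_ifs <;> positivity
    _ ≤ ∑ i ∈ S, ENNReal.ofReal (4 * (w i ^ (1 - 2 / q) * ‖c i‖ ^ 2)) *
          ENNReal.ofReal (T i ^ (q - 2) / (q - 2)) := by
        have hmi : ∀ i, Measurable ((Set.Ioo 0 (T i)).indicator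
            (fun t : ℝ => ENNReal.ofReal (t ^ (q - 3)))) := fun i =>
          (measurable_id.pow_const _).ennreal_ofReal.indicator measurableSet_Ioo
        rw [lintegral_finsetSum _ fun i _ => (hmi i).const_mul _]
        refine Finset.sum_le_sum fun i hi => ?_
        rw [lintegral_const_mul _ (hmi i)]
        gcongr
        refine (setLIntegral_le_lintegral _ _).trans ?_
        rw [lintegral_indicator measurableSet_Ioo, lint_rpow q _ hq (hT0 i hi)]
    _ = ENNReal.ofReal (∑ i ∈ S, ‖c i‖ ^ 2 * (4 * √(2 * q) ^ (q - 2) / (q - 2))) := by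
        rw [ENNReal.ofReal_sum_of_nonneg (fun i _ => by positivity)]
        refine Finset.sum_congr rfl fun i hi => ?_
        have hwi := hw i hi
        rw [← ENNReal.ofReal_mul (by positivity)]
        congr 1
        have : T i ^ (q - 2) = √(2 * q) ^ (q - 2) * (w i ^ (1 - 2 / q))⁻¹ := by
          simp only [hT]
          rw [Real.mul_rpow (by positivity) (by positivity), ← Real.rpow_mul hwi.le,
            ← Real.rpow_neg hwi.le]
          congr 2; field_simp
        rw [this]
        have : w i ^ (1 - 2 / q) ≠ 0 := by positivity
        generalize w i ^ (1 - 2 / q) = z at *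
        field_simp
    _ ≤ _ := by
        apply ENNReal.ofReal_le_ofReal
        rw [← Finset.sum_mul]
        exact mul_le_of_le_one_left (by positivity) hc1

lemma synth (q : ℝ) (hq : 2 ≤ q) : ∃ C : ℝ, 0 < C ∧ ∀ (X ι : Type) [MeasurableSpace X]
    (μ : Measure X) [IsProbabilityMeasure μ] (e : ι → X → ℂ), OrthSys μ e →
    ∀ (S : Finset ι) (c : ι → ℂ) (w : ι → ℝ), (∀ i ∈ S, 0 < w i) →
    (∀ t : ℝ, 0 < t → ((S.filter (fun i => t ≤ w i)).card : ℝ) * t ≤ 1) →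
    eLpNorm (fun x => ∑ i ∈ S, ((w i ^ (1 / 2 - 1 / q) : ℝ) : ℂ) * c i * e i x)
      (ENNReal.ofReal q) μ ≤ ENNReal.ofReal (C * √(∑ i ∈ S, ‖c i‖ ^ 2)) := by
  classical
  have hq0 : 0 < q := by linarith
  have key : ∀ (X : Type) [MeasurableSpace X] (μ : Measure X) (F : X → ℂ),
      eLpNorm F (ENNReal.ofReal q) μ = (∫⁻ x, ENNReal.ofReal (‖F x‖ ^ q) ∂μ) ^ (1 / q) := by
    intro X _ μ F
    rw [eLpNorm_eq_lintegral_rpow_enorm_toReal (by simpa using hq0) ENNReal.ofReal_ne_top,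
      ENNReal.toReal_ofReal hq0.le]
    congr 2; ext x
    rw [← ofReal_norm, ENNReal.ofReal_rpow_of_nonneg (norm_nonneg _) hq0.le]
  rcases hq.eq_or_lt with rfl | hq2
  · refine ⟨1, one_pos, ?_⟩
    intro X ι _ μ _ e h S c w hw hc
    rw [key]
    have := h.bessel S c
    simp only [sub_self, Real.rpow_zero, Complex.ofReal_one, one_mul, Real.rpow_two]
    rw [this, ENNReal.ofReal_rpow_of_nonneg (by positivity) (by positivity), Real.sqrt_eq_rpow]
  · have hq2' : 0 < q - 2 := by linarith
    set D : ℝ := q * (4 * √(2 * q) ^ (q - 2) / (q - 2)) with hD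
    have hD0 : 0 < D := by positivity
    refine ⟨D ^ (1 / q), by positivity, ?_⟩
    intro X ι _ μ _ e h S c w hw hc
    set M := √(∑ i ∈ S, ‖c i‖ ^ 2) with hM
    have hM2 : M ^ 2 = ∑ i ∈ S, ‖c i‖ ^ 2 := Real.sq_sqrt (by positivity)
    rcases (Real.sqrt_nonneg (∑ i ∈ S, ‖c i‖ ^ 2)).eq_or_lt with h0 | h0
    · rw [← hM] at h0
      have : ∀ i ∈ S, c i = 0 := by
        rw [← h0] at hM2
        intro i hi
        have := (Finset.sum_eq_zero_iff_of_nonneg (fun i _ => by positivity)).1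
          (show ∑ i ∈ S, ‖c i‖ ^ 2 = 0 by rw [← hM2]; simp) i hi
        simpa using this
      have hz : (fun x => ∑ i ∈ S, ((w i ^ (1 / 2 - 1 / q) : ℝ) : ℂ) * c i * e i x) = 0 := by
        ext x
        exact Finset.sum_eq_zero fun i hi => by rw [this i hi]; simp
      rw [hz]; simp
    · rw [← hM] at h0
      have hs := h.strong q hq2 S (fun i => c i / (M : ℂ)) w hw hc (by
        simp only [norm_div, div_pow, Complex.norm_real, Real.norm_of_nonneg h0.le]
        rw [← Finset.sum_div, ← hM2, div_self (by positivity)])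
      have hF : (fun x => ∑ i ∈ S, ((w i ^ (1 / 2 - 1 / q) : ℝ) : ℂ) * c i * e i x) =
          (M : ℂ) • (fun x => ∑ i ∈ S, ((w i ^ (1 / 2 - 1 / q) : ℝ) : ℂ) * (c i / (M : ℂ)) * e i x) := by
        ext x
        simp only [Pi.smul_apply, smul_eq_mul, Finset.mul_sum]
        refine Finset.sum_congr rfl fun i hi => ?_
        have : (M : ℂ) ≠ 0 := by exact_mod_cast h0.ne'
        field_simp
      rw [hF, eLpNorm_const_smul, key, mul_comm, ENNReal.ofReal_mul (by positivity)]
      gcongr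
      · rw [← ENNReal.ofReal_rpow_of_nonneg hD0.le (by positivity)]
        gcongr
      · rw [← ofReal_norm, Complex.norm_real, Real.norm_of_nonneg h0.le]

lemma analysis (p : ℝ) (hp1 : 1 < p) (hp2 : p ≤ 2) : ∃ C : ℝ, 0 < C ∧ ∀ (X ι : Type) [MeasurableSpace X]
    (μ : Measure X) [IsProbabilityMeasure μ] (e : ι → X → ℂ), OrthSys μ e →
    ∀ (S : Finset ι) (f : X → ℂ) (w : ι → ℝ), (∀ i ∈ S, 0 < w i) →
    (∀ t : ℝ, 0 < t → ((S.filter (fun i => t ≤ w i)).card : ℝ) * t ≤ 1) →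
    MemLp f (ENNReal.ofReal p) μ →
    ENNReal.ofReal (√(∑ i ∈ S, (w i ^ (1 / p - 1 / 2) * ‖∫ x, f x * (starRingEnd ℂ) (e i x) ∂μ‖) ^ 2))
      ≤ ENNReal.ofReal C * eLpNorm f (ENNReal.ofReal p) μ := by
  classical
  have hp0 : 0 < p := by linarith
  have hp10 : 0 < p - 1 := by linarith
  set q : ℝ := p / (p - 1) with hqd
  have hconj : p.HolderConjugate q := Real.HolderConjugate.conjExponent hp1
  have hq : 2 ≤ q := by rw [hqd, le_div_iff₀ hp10]; linarith
  have hq0 : 0 < q := by linarith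
  have hexp : 1 / p - 1 / 2 = 1 / 2 - 1 / q := by
    rw [hqd]; field_simp; ring
  obtain ⟨C, hC, H⟩ := synth q hq
  refine ⟨C, hC, ?_⟩
  intro X ι _ μ _ e h S f w hw hc hf
  have hfi : Integrable f μ := hf.integrable (by
    rw [← ENNReal.ofReal_one]; exact ENNReal.ofReal_le_ofReal hp1.le)
  set fh : ι → ℂ := fun i => ∫ x, f x * (starRingEnd ℂ) (e i x) ∂μ with hfh
  set c : ι → ℂ := fun i => ((w i ^ (1 / 2 - 1 / q) : ℝ) : ℂ) * fh i with hcd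
  have hcn : ∀ i ∈ S, ‖c i‖ = w i ^ (1 / p - 1 / 2) * ‖fh i‖ := by
    intro i hi
    have := hw i hi
    simp only [hcd, norm_mul, Complex.norm_real]
    rw [Real.norm_of_nonneg (by positivity), hexp]
  have hsum : ∑ i ∈ S, (w i ^ (1 / p - 1 / 2) * ‖fh i‖) ^ 2 = ∑ i ∈ S, ‖c i‖ ^ 2 :=
    Finset.sum_congr rfl fun i hi => by rw [hcn i hi]
  rw [hsum]
  set B := √(∑ i ∈ S, ‖c i‖ ^ 2) with hB
  have hB2 : B ^ 2 = ∑ i ∈ S, ‖c i‖ ^ 2 := Real.sq_sqrt (by positivity)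
  have hB0 : 0 ≤ B := Real.sqrt_nonneg _
  have HG := H X ι μ e h S c w hw hc
  rw [← hB] at HG
  set G : X → ℂ := fun x => ∑ i ∈ S, ((w i ^ (1 / 2 - 1 / q) : ℝ) : ℂ) * c i * e i x with hG
  have hGm : Measurable G := Finset.measurable_fun_sum _ fun i _ => (h.meas i).const_mul _
  have hint : ∫ x, f x * (starRingEnd ℂ) (G x) ∂μ = ((B ^ 2 : ℝ) : ℂ) := by
    have h1 : ∀ x, f x * (starRingEnd ℂ) (G x) = ∑ i ∈ S,
        (starRingEnd ℂ) (((w i ^ (1 / 2 - 1 / q) : ℝ) : ℂ) * c i) * (f x * (starRingEnd ℂ) (e i x)) := by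
      intro x
      rw [hG, map_sum, Finset.mul_sum]
      refine Finset.sum_congr rfl fun i _ => ?_
      rw [map_mul _ (_ * _)]; ring
    simp_rw [h1]
    rw [integral_finsetSum]
    · rw [hB2]; push_cast
      refine Finset.sum_congr rfl fun i _ => ?_
      rw [integral_const_mul, map_mul, Complex.conj_ofReal]
      rw [← Complex.conj_mul']
      simp only [hcd, hfh]; ring
    · intro i _
      refine Integrable.const_mul ?_ _
      refine hfi.mul_bdd (c := 1) (Complex.continuous_conj.measurable.comp (h.meas i)).aestronglyMeasurable
        (Filter.Eventually.of_forall fun x => ?_)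
      simp [h.norm_one]
  have hH : ENNReal.ofReal (B ^ 2) ≤ eLpNorm f (ENNReal.ofReal p) μ * eLpNorm G (ENNReal.ofReal q) μ := by
    have h1 := enorm_integral_le_lintegral_enorm (μ := μ) (fun x => f x * (starRingEnd ℂ) (G x))
    rw [hint, ← ofReal_norm, Complex.norm_real, Real.norm_of_nonneg (by positivity)] at h1
    refine h1.trans ?_
    have h2 := ENNReal.lintegral_mul_le_Lp_mul_Lq μ hconj hf.1.enorm hGm.enorm.aemeasurable
    rw [eLpNorm_eq_lintegral_rpow_enorm_toReal (by simpa using hp0) ENNReal.ofReal_ne_top,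
      ENNReal.toReal_ofReal hp0.le, eLpNorm_eq_lintegral_rpow_enorm_toReal (by simpa using hq0) ENNReal.ofReal_ne_top,
      ENNReal.toReal_ofReal hq0.le]
    refine le_trans (le_of_eq ?_) h2
    refine lintegral_congr fun x => ?_
    simp [enorm_mul]
  have hN : eLpNorm f (ENNReal.ofReal p) μ ≠ ⊤ := hf.2.ne
  obtain ⟨n, hn0, hn⟩ : ∃ n : ℝ, 0 ≤ n ∧ eLpNorm f (ENNReal.ofReal p) μ = ENNReal.ofReal n :=
    ⟨_, ENNReal.toReal_nonneg, (ENNReal.ofReal_toReal hN).symm⟩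
  have h3 := hH.trans (mul_le_mul_right HG _)
  rw [hn] at h3 ⊢
  rw [← ENNReal.ofReal_mul hn0, ENNReal.ofReal_le_ofReal_iff (by positivity)] at h3
  rw [← ENNReal.ofReal_mul hC.le]
  apply ENNReal.ofReal_le_ofReal
  rcases hB0.eq_or_lt with h0 | h0
  · rw [← h0]; positivity
  · refine le_of_mul_le_mul_right ?_ h0
    linarith

lemma combined (p q : ℝ) (hp1 : 1 < p) (hp2 : p ≤ 2) (hq : 2 ≤ q) (hpq : 0 < 1 / p - 1 / q) :
    ∃ C : ℝ, 0 < C ∧ ∀ (X ι : Type) [MeasurableSpace X]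
    (μ : Measure X) [IsProbabilityMeasure μ] (e : ι → X → ℂ), OrthSys μ e →
    ∀ (S : Finset ι) (f : X → ℂ) (s : ι → ℂ) (K : ℝ), 0 < K →
    (∀ t : ℝ, 0 < t → t * ((S.filter (fun i => t ≤ ‖s i‖)).card : ℝ) ^ (1 / p - 1 / q) ≤ K) →
    MemLp f (ENNReal.ofReal p) μ →
    eLpNorm (fun x => ∑ i ∈ S, s i * (∫ x, f x * (starRingEnd ℂ) (e i x) ∂μ) * e i x)
      (ENNReal.ofReal q) μ ≤ ENNReal.ofReal (C * K) * eLpNorm f (ENNReal.ofReal p) μ := by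
  classical
  obtain ⟨C1, hC1, H1⟩ := synth q hq
  obtain ⟨C2, hC2, H2⟩ := analysis p hp1 hp2
  refine ⟨C1 * C2, by positivity, ?_⟩
  intro X ι _ μ _ e h S f s K hK hs hf
  set fh : ι → ℂ := fun i => ∫ x, f x * (starRingEnd ℂ) (e i x) ∂μ with hfh
  set γ := 1 / p - 1 / q with hγ
  set w : ι → ℝ := fun i => (‖s i‖ / K) ^ (1 / γ) with hwd
  set S' := S.filter (fun i => s i ≠ 0) with hS'
  have hw : ∀ i ∈ S', 0 < w i := by
    intro i hi
    have : 0 < ‖s i‖ := norm_pos_iff.2 (Finset.mem_filter.1 hi).2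
    simp only [hwd]; positivity
  have hwγ : ∀ i, ‖s i‖ = K * w i ^ γ := by
    intro i
    simp only [hwd]
    rw [← Real.rpow_mul (by positivity), one_div_mul_cancel hpq.ne', Real.rpow_one]
    field_simp
  have hc : ∀ t : ℝ, 0 < t → ((S'.filter (fun i => t ≤ w i)).card : ℝ) * t ≤ 1 := by
    intro t ht
    have h1 := hs (K * t ^ γ) (by positivity)
    have h2 : ((S'.filter (fun i => t ≤ w i)).card : ℝ) ≤
        ((S.filter (fun i => K * t ^ γ ≤ ‖s i‖)).card : ℝ) := by
      norm_cast
      apply Finset.card_le_card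
      intro i hi
      simp only [hS', Finset.mem_filter] at hi ⊢
      refine ⟨hi.1.1, ?_⟩
      rw [hwγ i]
      have := hi.2
      gcongr
    set n : ℝ := ((S'.filter (fun i => t ≤ w i)).card : ℝ)
    have hn0 : 0 ≤ n := Nat.cast_nonneg _
    have h3 : K * t ^ γ * n ^ γ ≤ K := 
      le_trans (mul_le_mul_of_nonneg_left (Real.rpow_le_rpow hn0 h2 hpq.le) (by positivity)) h1
    have h4 : (n * t) ^ γ ≤ 1 := by
      rw [Real.mul_rpow hn0 ht.le]
      refine le_of_mul_le_mul_left ?_ hK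
      linarith
    by_contra hcon
    exact absurd h4 (not_le.2 (Real.one_lt_rpow (not_le.1 hcon) hpq))
  set c : ι → ℂ := fun i => s i * fh i / ((w i ^ (1 / 2 - 1 / q) : ℝ) : ℂ) with hcd
  have hF : (fun x => ∑ i ∈ S, s i * fh i * e i x) =
      fun x => ∑ i ∈ S', ((w i ^ (1 / 2 - 1 / q) : ℝ) : ℂ) * c i * e i x := by
    ext x
    rw [← Finset.sum_filter_of_ne (s := S) (p := fun i => s i ≠ 0)]
    · refine Finset.sum_congr rfl fun i hi => ?_
      have hwi := hw i hi
      have : ((w i ^ (1 / 2 - 1 / q) : ℝ) : ℂ) ≠ 0 := by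
        exact_mod_cast (by positivity : w i ^ (1 / 2 - 1 / q) ≠ 0)
      simp only [hcd]
      rw [mul_div_cancel₀ _ this]
    · intro i _ h0 h1
      rw [h1] at h0; simp at h0
  have hcn : ∀ i ∈ S', ‖c i‖ = K * (w i ^ (1 / p - 1 / 2) * ‖fh i‖) := by
    intro i hi
    have hwi := hw i hi
    simp only [hcd, norm_div, norm_mul, Complex.norm_real]
    rw [Real.norm_of_nonneg (by positivity), hwγ i, hγ,
      show 1 / p - 1 / q = (1 / p - 1 / 2) + (1 / 2 - 1 / q) by ring, Real.rpow_add hwi]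
    have : w i ^ (1 / 2 - 1 / q) ≠ 0 := by positivity
    generalize w i ^ (1 / 2 - 1 / q) = z at *
    field_simp
  have hsq : √(∑ i ∈ S', ‖c i‖ ^ 2) = K * √(∑ i ∈ S', (w i ^ (1 / p - 1 / 2) * ‖fh i‖) ^ 2) := by
    have h1 : ∑ i ∈ S', ‖c i‖ ^ 2 = K ^ 2 * ∑ i ∈ S', (w i ^ (1 / p - 1 / 2) * ‖fh i‖) ^ 2 := by
      rw [Finset.mul_sum]
      exact Finset.sum_congr rfl fun i hi => by rw [hcn i hi, mul_pow]
    rw [h1, Real.sqrt_mul (sq_nonneg K), Real.sqrt_sq hK.le]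
  rw [hF]
  refine (H1 X ι μ e h S' c w hw hc).trans ?_
  rw [hsq, ← mul_assoc, ENNReal.ofReal_mul (by positivity)]
  refine (mul_le_mul_right (H2 X ι μ e h S' f w hw hc hf) _).trans ?_
  rw [← mul_assoc, ← ENNReal.ofReal_mul (by positivity)]
  apply le_of_eq
  congr 2; ring


/-- The lattice as an additive subgroup. -/
def latGrp {d : ℕ} (A : Matrix (Fin d) (Fin d) ℝ) : AddSubgroup (Fin d → ℝ) where
  carrier := latticeOf A
  zero_mem' := ⟨0, by ext i; simp [Matrix.mulVec, dotProduct]⟩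
  add_mem' := by
    rintro _ _ ⟨k, rfl⟩ ⟨l, rfl⟩
    refine ⟨k + l, ?_⟩
    rw [← Matrix.mulVec_add]
    congr 1; ext i; simp
  neg_mem' := by
    rintro _ ⟨k, rfl⟩
    refine ⟨-k, ?_⟩
    rw [← Matrix.mulVec_neg]
    congr 1; ext i; simp

lemma latGrp_countable {d : ℕ} (A : Matrix (Fin d) (Fin d) ℝ) : Countable (latGrp A) := by
  have : (latticeOf A).Countable := by
    refine (Set.countable_range (fun k : Fin d → ℤ => A.mulVec (fun i => (k i : ℝ)))).mono ?_
    rintro _ ⟨k, rfl⟩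
    exact ⟨k, rfl⟩
  exact this.to_subtype

lemma isAddFD {d : ℕ} (A : Matrix (Fin d) (Fin d) ℝ) (Ω : Set (Fin d → ℝ))
    (h : IsFundDomain (latticeOf A) Ω) : IsAddFundamentalDomain (latGrp A) Ω volume := by
  refine IsAddFundamentalDomain.mk' h.1.nullMeasurableSet fun x => ?_
  obtain ⟨⟨ω, l⟩, ⟨h1, h2, h3⟩, hu⟩ := h.2 x
  have hl : l ∈ latGrp A := h2
  refine ⟨⟨-l, neg_mem hl⟩, ?_, ?_⟩
  · change -l + x ∈ Ω
    rw [h3]; simpa using h1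
  · rintro ⟨g, hg⟩ hgx
    have hgx : g + x ∈ Ω := hgx
    have := hu (g + x, -g) ⟨hgx, neg_mem hg, by simp⟩
    ext1
    simp only [Prod.mk.injEq] at this
    exact neg_eq_iff_eq_neg.1 this.2

/-- The character. -/
def chr {d : ℕ} (κ : Fin d → ℝ) (x : Fin d → ℝ) : ℂ :=
  Complex.exp (2 * π * Complex.I * (∑ i, κ i * x i))

lemma chr_eq {d : ℕ} (κ x : Fin d → ℝ) :
    chr κ x = Complex.exp (((2 * π * ∑ i, κ i * x i : ℝ) : ℂ) * Complex.I) := by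
  rw [chr]; push_cast; ring_nf

lemma chr_norm {d : ℕ} (κ x : Fin d → ℝ) : ‖chr κ x‖ = 1 := by
  rw [chr_eq, Complex.norm_exp_ofReal_mul_I]

lemma chr_conj {d : ℕ} (κ x : Fin d → ℝ) : (starRingEnd ℂ) (chr κ x) =
    Complex.exp (-2 * π * Complex.I * (∑ i, κ i * x i)) := by
  rw [chr_eq, ← Complex.exp_conj, map_mul, Complex.conj_ofReal, Complex.conj_I]
  push_cast; ring_nf

lemma chr_cont {d : ℕ} (κ : Fin d → ℝ) : Continuous (chr κ) := by
  unfold chr; fun_prop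

lemma chr_add {d : ℕ} (κ x y : Fin d → ℝ) : chr κ (x + y) = chr κ x * chr κ y := by
  simp only [chr, ← Complex.exp_add, Pi.add_apply, Complex.ofReal_add, mul_add, Finset.sum_add_distrib]

lemma chr_sub {d : ℕ} (κ η x : Fin d → ℝ) :
    chr κ x * (starRingEnd ℂ) (chr η x) = chr (κ - η) x := by
  rw [chr_conj]
  simp only [chr, ← Complex.exp_add, Pi.sub_apply, Complex.ofReal_sub, sub_mul, Finset.sum_sub_distrib]
  congr 1; ring

lemma chr_lat {d : ℕ} {L : Set (Fin d → ℝ)} {κ : Fin d → ℝ} (hκ : κ ∈ dualLattice L)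
    {l : Fin d → ℝ} (hl : l ∈ L) : chr κ l = 1 := by
  obtain ⟨n, hn⟩ := hκ l hl
  rw [chr_eq, hn, Complex.exp_eq_one_iff]
  exact ⟨n, by push_cast; ring⟩

lemma chr_integral {d : ℕ} (A : Matrix (Fin d) (Fin d) ℝ) (Ω : Set (Fin d → ℝ))
    (h : IsFundDomain (latticeOf A) Ω) (κ : Fin d → ℝ) (hκ : κ ∈ dualLattice (latticeOf A))
    (h0 : κ ≠ 0) : ∫ x in Ω, chr κ x = 0 := by
  have := latGrp_countable A
  have hfd := isAddFD A Ω h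
  have hpos : 0 < ∑ i, κ i * κ i := by
    obtain ⟨i, hi⟩ := Function.ne_iff.1 h0
    refine Finset.sum_pos' (fun i _ => mul_self_nonneg _) ⟨i, Finset.mem_univ _, ?_⟩
    exact mul_self_pos.2 hi
  set v : Fin d → ℝ := (1 / (2 * ∑ i, κ i * κ i)) • κ with hv
  have hcv : chr κ v = -1 := by
    rw [chr_eq, ← Complex.exp_pi_mul_I]
    congr 3
    have : ∑ i, κ i * v i = 1 / 2 := by
      simp only [hv, Pi.smul_apply, smul_eq_mul, mul_left_comm (κ _), ← Finset.mul_sum]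
      generalize ∑ i, κ i * κ i = z at hpos
      field_simp
    rw [this]; ring
  have h1 := hfd.setIntegral_eq (hfd.vadd_of_comm v) (f := chr κ) (by
    rintro ⟨g, hg⟩ x
    change chr κ (g + x) = _
    rw [chr_add, chr_lat hκ hg, one_mul])
  rw [← Set.image_vadd, (measurePreserving_vadd v volume).setIntegral_image_emb
    (measurableEmbedding_const_vadd v)] at h1
  simp only [vadd_eq_add, chr_add, hcv] at h1
  rw [integral_const_mul] at h1
  have : (2 : ℂ) * ∫ x in Ω, chr κ x = 0 := by linear_combination h1
  simpa using this

lemma normMeasure_prob {d : ℕ} (Ω : Set (Fin d → ℝ)) (h0 : volume Ω ≠ 0) (h1 : volume Ω ≠ ⊤) :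
    IsProbabilityMeasure (normMeasure Ω) :=
  ⟨by simp [normMeasure, ENNReal.inv_mul_cancel h0 h1]⟩

lemma orthSys_chr {d : ℕ} (A : Matrix (Fin d) (Fin d) ℝ) (Ω : Set (Fin d → ℝ))
    (h : IsFundDomain (latticeOf A) Ω) (h0 : volume Ω ≠ 0) (h1 : volume Ω ≠ ⊤) :
    OrthSys (normMeasure Ω) (fun (κ : dualLattice (latticeOf A)) => chr (κ : Fin d → ℝ)) where
  meas i := (chr_cont _).measurable
  norm_one i x := chr_norm _ _
  self i := by
    have := normMeasure_prob Ω h0 h1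
    simp [Complex.mul_conj', chr_norm]
  ne i j hij := by
    simp only [chr_sub]
    rw [normMeasure, integral_smul_measure, chr_integral A Ω h, smul_zero]
    · intro l hl
      obtain ⟨n, hn⟩ := i.2 l hl
      obtain ⟨m, hm⟩ := j.2 l hl
      refine ⟨n - m, ?_⟩
      simp only [Pi.sub_apply, sub_mul, Finset.sum_sub_distrib, hn, hm]
      push_cast; ring
    · exact sub_ne_zero.2 fun h => hij (Subtype.ext h)

theorem multiplier_lp_lq (p q : ℝ) (hp1 : 1 < p) (hp2 : p ≤ 2) (hq : 2 ≤ q) :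
    ∃ C : ℝ, 0 < C ∧ ∀ (d : ℕ) (A : Matrix (Fin d) (Fin d) ℝ), IsUnit A.det →
      ∀ (Ω : Set (Fin d → ℝ)), IsFundDomain (latticeOf A) Ω →
      ∀ (σ : (Fin d → ℝ) → ℂ) (K : ℝ≥0∞), K ≠ ⊤ →
      (∀ s : ℝ, 0 < s →
        ENNReal.ofReal s *
          ({κ ∈ dualLattice (latticeOf A) | s ≤ ‖σ κ‖}.encard : ℝ≥0∞) ^ (1 / p - 1 / q) ≤ K) →
      ∀ (f g : (Fin d → ℝ) → ℂ), ContDiff ℝ (⊤ : ℕ∞) f →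
      (∀ x : Fin d → ℝ, ∀ l ∈ latticeOf A, f (x + l) = f x) →
      (∀ x : Fin d → ℝ, g x = ∑' κ : dualLattice (latticeOf A),
          σ ↑κ * fourierCoef Ω f ↑κ *
            Complex.exp (2 * π * Complex.I * (∑ i, (κ : Fin d → ℝ) i * x i))) →
      eLpNorm g (ENNReal.ofReal q) (normMeasure Ω)
        ≤ ENNReal.ofReal C * K * eLpNorm f (ENNReal.ofReal p) (normMeasure Ω) := by
  classical
  have hp0 : 0 < p := by linarith
  have hq0 : 0 < q := by linarith
  have hle : 1 / q ≤ 1 / p := one_div_le_one_div_of_le hp0 (by linarith)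
  rcases hle.eq_or_lt with heq | hlt
  · -- degenerate exponent: the hypothesis forces `K = ⊤`
    refine ⟨1, one_pos, ?_⟩
    intro d A _ Ω _ σ K hK hs
    exfalso
    have h1 := hs (K.toReal + 1) (by positivity)
    rw [heq, sub_self, ENNReal.rpow_zero, mul_one, ENNReal.ofReal_le_iff_le_toReal hK] at h1
    linarith
  have hpq : 0 < 1 / p - 1 / q := by linarith
  obtain ⟨C, hC, H⟩ := combined p q hp1 hp2 hq hpq
  refine ⟨C, hC, ?_⟩
  intro d A _ Ω hΩ σ K hK hs f g hf _ hg
  by_cases hv0 : volume Ω = 0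
  · have : normMeasure Ω = 0 := by
      rw [normMeasure, Measure.restrict_eq_zero.2 hv0, smul_zero]
    rw [this]; simp
  by_cases hv1 : volume Ω = ⊤
  · have : normMeasure Ω = 0 := by
      rw [normMeasure, hv1, ENNReal.inv_top, zero_smul]
    rw [this]; simp
  have hprob := normMeasure_prob Ω hv0 hv1
  have hsys := orthSys_chr A Ω hΩ hv0 hv1
  set a : dualLattice (latticeOf A) → ℂ := fun κ => σ κ * fourierCoef Ω f κ with ha
  have hg' : ∀ x, g x = ∑' κ : dualLattice (latticeOf A), a κ * chr (κ : Fin d → ℝ) x := hg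
  by_cases hsum : Summable (fun κ => ‖a κ‖)
  swap
  · have : g = 0 := by
      ext x
      rw [hg' x, tsum_eq_zero_of_not_summable]
      · rfl
      intro hcon
      apply hsum
      simpa [chr_norm] using hcon.norm
    rw [this]; simp
  by_cases hK0 : K = 0
  · have : g = 0 := by
      ext x
      rw [hg' x]
      have hz : ∀ κ : dualLattice (latticeOf A), σ κ = 0 := by
        intro κ
        by_contra hne
        have hpos : 0 < ‖σ κ‖ := norm_pos_iff.2 hne
        have h1 := hs _ hpos
        rw [hK0, nonpos_iff_eq_zero, mul_eq_zero] at h1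
        rcases h1 with h1 | h1
        · simp at h1
          exact hne h1
        · rw [ENNReal.rpow_eq_zero_iff_of_pos hpq] at h1
          have h2 : {κ' ∈ dualLattice (latticeOf A) | ‖σ κ‖ ≤ ‖σ κ'‖}.encard = 0 := by
            exact_mod_cast h1
          rw [Set.encard_eq_zero] at h2
          have : (κ : Fin d → ℝ) ∈ {κ' ∈ dualLattice (latticeOf A) | ‖σ κ‖ ≤ ‖σ κ'‖} :=
            ⟨κ.2, le_rfl⟩
          rw [h2] at this
          exact this
      simp [ha, hz]
    rw [this]; simp
  by_cases hfN : eLpNorm f (ENNReal.ofReal p) (normMeasure Ω) = ⊤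
  · rw [hfN, ENNReal.mul_top]
    · exact le_top
    · simp [hK0, hC]
  have hmem : MemLp f (ENNReal.ofReal p) (normMeasure Ω) :=
    ⟨hf.continuous.aestronglyMeasurable, lt_top_iff_ne_top.2 hfN⟩
  have hKr : 0 < K.toReal := ENNReal.toReal_pos hK0 hK
  have hfin : ∀ S : Finset (dualLattice (latticeOf A)),
      eLpNorm (fun x => ∑ κ ∈ S, a κ * chr (κ : Fin d → ℝ) x) (ENNReal.ofReal q) (normMeasure Ω)
        ≤ ENNReal.ofReal C * K * eLpNorm f (ENNReal.ofReal p) (normMeasure Ω) := by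
    intro S
    have h1 := H _ _ (normMeasure Ω) _ hsys S f (fun κ => σ κ) K.toReal hKr (by
      intro t ht
      rw [← ENNReal.ofReal_le_iff_le_toReal hK, ENNReal.ofReal_mul ht.le,
        ← ENNReal.ofReal_rpow_of_nonneg (Nat.cast_nonneg _) hpq.le, ENNReal.ofReal_natCast]
      refine le_trans ?_ (hs t ht)
      gcongr
      set S' := S.filter (fun κ : dualLattice (latticeOf A) => t ≤ ‖σ κ‖) with hS'
      have h2 : ((S'.map (Function.Embedding.subtype _) : Finset (Fin d → ℝ)) : Set (Fin d → ℝ)) ⊆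
          {κ ∈ dualLattice (latticeOf A) | t ≤ ‖σ κ‖} := by
        intro κ hκ
        simp only [Finset.coe_map, Set.mem_image] at hκ
        obtain ⟨κ', hκ', rfl⟩ := hκ
        exact ⟨κ'.2, (Finset.mem_filter.1 hκ').2⟩
      have h3 := Set.encard_le_encard h2
      rw [Set.encard_coe_eq_coe_finsetCard, Finset.card_map] at h3
      exact_mod_cast h3) hmem
    rw [ENNReal.ofReal_mul hC.le, ENNReal.ofReal_toReal hK] at h1
    refine le_trans (le_of_eq ?_) h1
    congr 1
    ext x
    refine Finset.sum_congr rfl fun κ _ => ?_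
    simp only [ha, fourierCoef, chr_conj]
  have hcg : Continuous g := by
    have : g = fun x => ∑' κ : dualLattice (latticeOf A), a κ * chr (κ : Fin d → ℝ) x := funext hg'
    rw [this]
    exact continuous_tsum (fun κ => continuous_const.mul (chr_cont _)) hsum
      (fun κ x => by simp [chr_norm])
  refine ENNReal.le_of_forall_pos_le_add fun ε hε _ => ?_
  have htend := (tendsto_tsum_compl_atTop_zero (fun κ => ‖a κ‖)).eventually (gt_mem_nhds (show (0 : ℝ) < ε from hε))
  obtain ⟨S, hS⟩ := htend.exists
  have hdiff : ∀ x, ‖g x - ∑ κ ∈ S, a κ * chr (κ : Fin d → ℝ) x‖ ≤ ε := by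
    intro x
    have hsx : Summable (fun κ : dualLattice (latticeOf A) => a κ * chr (κ : Fin d → ℝ) x) :=
      Summable.of_norm (by simpa [chr_norm] using hsum)
    rw [hg' x, ← hsx.sum_add_tsum_compl (s := S), add_sub_cancel_left]
    refine le_trans (norm_tsum_le_tsum_norm ?_) ?_
    · simp only [norm_mul, chr_norm, mul_one]
      exact hsum.subtype _
    · simp only [norm_mul, chr_norm, mul_one]
      exact hS.le
  have hcS : Continuous (fun x => ∑ κ ∈ S, a κ * chr (κ : Fin d → ℝ) x) :=
    continuous_finsetSum _ fun κ _ => continuous_const.mul (chr_cont _)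
  have hgd : g = (fun x => ∑ κ ∈ S, a κ * chr (κ : Fin d → ℝ) x) +
      (fun x => g x - ∑ κ ∈ S, a κ * chr (κ : Fin d → ℝ) x) := by
    ext x; simp
  rw [hgd]
  refine (eLpNorm_add_le hcS.aestronglyMeasurable (hcg.sub hcS).aestronglyMeasurable ?_).trans ?_
  · rw [← ENNReal.ofReal_one]; exact ENNReal.ofReal_le_ofReal (by linarith)
  refine add_le_add (hfin S) ?_
  refine (eLpNorm_le_of_ae_bound (Filter.Eventually.of_forall hdiff)).trans ?_
  simp
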